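/- Under the stated hypotheses, let $0 < p \le 1$, $0 < r < 1$, $\frac{1}{q} = \frac{1}{p} - r$, and set $D = \max_{1 \le i \le m} \max_{|y|=1} |A_i y|$. Then there exists $C > 0$ such that for every $p$-atom $a$ supported on the ball $B(z, \delta)$, writing $B_i^* = B(A_i z, 4 D \delta)$ and $R = \left(\bigcup_{i=1}^m B_i^*\right)^c$, one has $\int_{R} |T_r a(x)|^q \, dx \le C$, with $C$ independent of the atom $a$, of $z$ and of $\delta$. -/

import Mathlib

/-!
Put `sᵢ = (1 - r) nᵢ`, `N = ⌊n (1/p - 1)⌋` and let `ρ` be the distance from `x` to the nearest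
`Aᵢ z`, so that `ρ ≥ 4 D δ` on the region of integration. With `ε = D δ / ρ ≤ 1/4`, for `y` in
the ball one has
`‖x - Aᵢ y‖ ^ (-sᵢ) = ‖x - Aᵢ z‖ ^ (-sᵢ) (1 - wᵢ) ^ (-sᵢ / 2)`, where
`wᵢ = 2 ⟪x - Aᵢ z, Aᵢ (y - z)⟫ / ‖x - Aᵢ z‖² - ‖Aᵢ (y - z)‖² / ‖x - Aᵢ z‖²`
is a fixed polynomial in affine forms of `y` that are bounded by `ε`. Truncating the binomial
series of each factor, multiplying out and discarding the monomials of degree above `N` gives a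
polynomial of degree at most `N` in `y` approximating the kernel up to a relative error
`O(ε ^ (N + 1))` (`kernel_polyApprox`, `low_degree_approx`, `kernel_local`). This replaces
derivative estimates for the Taylor remainder.

The moment conditions annihilate that polynomial, hence (`atom_pointwise`)
`|T_r a(x)| ≤ C δ ^ (N + 1) |B| ^ (1 - 1/p) ρ ^ (-(n (1 - r) + N + 1))`.
As `N + 1 > n (1/p - 1)`, the `q`-th power of the right-hand side is integrable at infinity, its
integral over `ρ ≥ 4 D δ` is at most the sum over `k` of the tail integrals around `Aₖ z`
(`lintegral_tail`), and the powers of `δ` cancel because `1/q = 1/p - r`. The constant `D` is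
positive because `∑ Aᵢ` is invertible.
-/

open MeasureTheory Matrix

/-- A `p`-atom (`0 < p ≤ 1`): a measurable function supported on a ball `B = B(z, δ)` with
`‖a‖_∞ ≤ |B|^{-1/p}` and vanishing moments up to order `⌊n(p⁻¹ - 1)⌋`. -/
def IsPAtom (n : ℕ) (p : ℝ) (z : EuclideanSpace ℝ (Fin n)) (δ : ℝ)
    (a : EuclideanSpace ℝ (Fin n) → ℝ) : Prop :=
  0 < δ ∧ Measurable a ∧ Function.support a ⊆ Metric.ball z δ ∧
    eLpNorm a ⊤ volume ≤ (volume (Metric.ball z δ)) ^ (-(1 / p)) ∧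
    ∀ β : Fin n → ℕ, (∑ i, β i) ≤ ⌊(n : ℝ) * (p⁻¹ - 1)⌋₊ →
      ∫ y, (∏ i, y i ^ β i) * a y = 0

/-! ### Polynomial approximation of the normalised kernel -/

open Finset in
/-- Truncated binomial series of `(1 - w) ^ e`, with a uniform remainder on `|w| ≤ 9/16`. -/
lemma binom_approx (e : ℝ) (k : ℕ) :
    ∃ P : Polynomial ℝ, ∃ C : ℝ, 0 ≤ C ∧ ∀ w : ℝ, |w| ≤ 9 / 16 →
      |(1 - w) ^ e - P.eval w| ≤ C * |w| ^ k := by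
  obtain ⟨a, ha, C, hC, h⟩ :=
    (Real.one_add_rpow_hasFPowerSeriesOnBall_zero (a := e)).uniform_geometric_approx'
      (r' := 3 / 4) (by
        rw [show (1 : ENNReal) = ((1 : NNReal) : ENNReal) by simp, ENNReal.coe_lt_coe]
        rw [← NNReal.coe_lt_coe]; norm_num)
  refine ⟨∑ j ∈ range k, Polynomial.C (Ring.choose e j) * (-Polynomial.X) ^ j,
    C * (a * (4 / 3)) ^ k, by have := ha.1; positivity, fun w hw => ?_⟩
  have h1 := h (-w) (by
    simp only [Metric.mem_ball, dist_zero_right, norm_neg, Real.norm_eq_abs]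
    norm_num; linarith) k
  have h2 : (binomialSeries ℝ e).partialSum k (-w) =
      Polynomial.eval w (∑ j ∈ range k, Polynomial.C (Ring.choose e j) * (-Polynomial.X) ^ j) := by
    rw [FormalMultilinearSeries.partialSum, Polynomial.eval_finsetSum]
    refine sum_congr rfl fun j _ => ?_
    rw [binomialSeries_apply]
    simp
  rw [h2] at h1
  simp only [zero_add, Real.norm_eq_abs, abs_neg] at h1
  rw [← sub_eq_add_neg] at h1
  refine h1.trans (le_of_eq ?_)
  norm_num
  ring

/-- `F` agrees with a fixed polynomial up to `O(ε ^ k)`, uniformly over the pairs `(X, ε)` in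
`dom`, where `ε` is a bound for the size of the point `X` recorded alongside it. -/
def PolyApprox {ι : Type*} (k : ℕ) (dom : Set ((ι → ℝ) × ℝ)) (F : (ι → ℝ) → ℝ) : Prop :=
  ∃ Q : MvPolynomial ι ℝ, ∃ C : ℝ, 0 ≤ C ∧ ∀ t ∈ dom,
    |F t.1 - MvPolynomial.eval t.1 Q| ≤ C * t.2 ^ k

lemma eval_bounded {ι : Type*} (Q : MvPolynomial ι ℝ) :
    ∃ M : ℝ, 0 ≤ M ∧ ∀ X : ι → ℝ, (∀ l, |X l| ≤ 1) → |MvPolynomial.eval X Q| ≤ M := by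
  induction Q using MvPolynomial.induction_on with
  | C c => exact ⟨|c|, abs_nonneg _, fun X _ => by simp⟩
  | add p q hp hq =>
    obtain ⟨M, hM, h⟩ := hp
    obtain ⟨M', hM', h'⟩ := hq
    refine ⟨M + M', by positivity, fun X hX => ?_⟩
    rw [map_add]
    exact (abs_add_le _ _).trans (add_le_add (h X hX) (h' X hX))
  | mul_X p i hp =>
    obtain ⟨M, hM, h⟩ := hp
    refine ⟨M, hM, fun X hX => ?_⟩
    rw [map_mul, abs_mul, MvPolynomial.eval_X]
    calc _ ≤ M * 1 := mul_le_mul (h X hX) (hX i) (abs_nonneg _) hM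
      _ = M := mul_one M

/-- The class is multiplicative because polynomials are bounded on the unit cube. -/
lemma PolyApprox.mul {ι : Type*} {k : ℕ} {dom : Set ((ι → ℝ) × ℝ)} {F G : (ι → ℝ) → ℝ}
    (hdom : ∀ t ∈ dom, 0 ≤ t.2 ∧ t.2 ≤ 1 ∧ ∀ l, |t.1 l| ≤ 1)
    (hF : PolyApprox k dom F) (hG : PolyApprox k dom G) :
    PolyApprox k dom (fun X => F X * G X) := by
  obtain ⟨P, C, hC, hP⟩ := hF
  obtain ⟨Q, C', hC', hQ⟩ := hG
  obtain ⟨M, hM, hPM⟩ := eval_bounded P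
  obtain ⟨M', hM', hQM⟩ := eval_bounded Q
  refine ⟨P * Q, C * (M' + C') + M * C', by positivity, fun t ht => ?_⟩
  obtain ⟨h0, h1, hl⟩ := hdom t ht
  have e1 := hP t ht
  have e2 := hQ t ht
  have hpow : t.2 ^ k ≤ 1 := pow_le_one₀ h0 h1
  have hp0 : 0 ≤ t.2 ^ k := pow_nonneg h0 k
  have hG : |G t.1| ≤ M' + C' := by
    have := abs_add_le (MvPolynomial.eval t.1 Q) (G t.1 - MvPolynomial.eval t.1 Q)
    rw [add_sub_cancel] at this
    have := hQM t.1 hl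
    nlinarith
  rw [map_mul]
  calc |F t.1 * G t.1 - MvPolynomial.eval t.1 P * MvPolynomial.eval t.1 Q|
      = |(F t.1 - MvPolynomial.eval t.1 P) * G t.1 +
          MvPolynomial.eval t.1 P * (G t.1 - MvPolynomial.eval t.1 Q)| := by ring_nf
    _ ≤ |F t.1 - MvPolynomial.eval t.1 P| * |G t.1| +
          |MvPolynomial.eval t.1 P| * |G t.1 - MvPolynomial.eval t.1 Q| := by
        rw [← abs_mul, ← abs_mul]; exact abs_add_le _ _
    _ ≤ (C * t.2 ^ k) * (M' + C') + M * (C' * t.2 ^ k) := by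
        gcongr
        exact hPM t.1 hl
    _ = _ := by ring

lemma PolyApprox.prod {ι κ : Type*} {k : ℕ} {dom : Set ((ι → ℝ) × ℝ)} (s : Finset κ)
    {F : κ → (ι → ℝ) → ℝ}
    (hdom : ∀ t ∈ dom, 0 ≤ t.2 ∧ t.2 ≤ 1 ∧ ∀ l, |t.1 l| ≤ 1)
    (hF : ∀ i, PolyApprox k dom (F i)) :
    PolyApprox k dom (fun X => ∏ i ∈ s, F i X) := by
  classical
  induction s using Finset.induction_on with
  | empty => exact ⟨1, 0, le_rfl, fun t _ => by simp⟩
  | insert a s ha ih =>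
    simp only [Finset.prod_insert ha]
    exact (hF a).mul hdom ih

/-- Pairs `(X, ε)` with `ε ≤ 1/4` and all coordinates of `X` bounded by `ε`. The coordinate
`(i, none)` stands for `⟪x - Tᵢ z, Tᵢ (y - z)⟫ / ‖x - Tᵢ z‖²` and the `(i, some j)` for the
components of `Tᵢ (y - z) / ‖x - Tᵢ z‖`, a vector of Euclidean norm at most `ε`. -/
def approxDom (m n : ℕ) : Set ((Fin m × Option (Fin n) → ℝ) × ℝ) :=
  {t | 0 ≤ t.2 ∧ t.2 ≤ 1 / 4 ∧ (∀ l, |t.1 l| ≤ t.2) ∧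
    ∀ i, ∑ j, t.1 (i, some j) ^ 2 ≤ t.2 ^ 2}

/-- The normalised kernel is a function of the coordinates of `approxDom`, and its polynomial
approximation depends on no other parameter. The bound `2ε + ε² ≤ 9/16` keeps the binomial
series in its disc of convergence. -/
lemma kernel_polyApprox (m n k : ℕ) (e : Fin m → ℝ) :
    PolyApprox k (approxDom m n) (fun X => ∏ i,
      (1 - (2 * X (i, none) - ∑ j, X (i, some j) ^ 2)) ^ e i) := by
  refine PolyApprox.prod _ ?_ fun i => ?_
  · rintro t ⟨h0, h1, h2, -⟩
    exact ⟨h0, by linarith, fun l => (h2 l).trans (by linarith)⟩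
  obtain ⟨P, C, hC, hP⟩ := binom_approx (e i) k
  refine ⟨Polynomial.aeval (2 * MvPolynomial.X (i, none) -
    ∑ j, MvPolynomial.X (i, some j) ^ 2) P, C * 3 ^ k, by positivity, ?_⟩
  rintro t ⟨h0, h1, h2, h3⟩
  have hw : |2 * t.1 (i, none) - ∑ j, t.1 (i, some j) ^ 2| ≤ 2 * t.2 + t.2 ^ 2 := by
    have a1 := abs_le.1 (h2 (i, none))
    have a2 := h3 i
    have a3 : 0 ≤ ∑ j, t.1 (i, some j) ^ 2 := Finset.sum_nonneg fun j _ => sq_nonneg _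
    rw [abs_le]
    constructor <;> nlinarith
  have e1 : MvPolynomial.eval t.1 (Polynomial.aeval (2 * MvPolynomial.X (i, none) -
      ∑ j, MvPolynomial.X (i, some j) ^ 2) P) =
      P.eval (2 * t.1 (i, none) - ∑ j, t.1 (i, some j) ^ 2) := by
    rw [← MvPolynomial.coe_aeval_eq_eval, RingHom.coe_coe, ← Polynomial.aeval_algHom_apply]
    simp
  rw [e1]
  refine (hP _ (hw.trans (by nlinarith))).trans ?_
  rw [mul_assoc, ← mul_pow]
  gcongr
  refine hw.trans (by nlinarith)

/-- Substituting affine forms bounded by `ε` into a polynomial gives a polynomial in `y` of degree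
at most `N`, up to an error `O(ε ^ (N + 1))`: the monomials of degree above `N` are the error. -/
lemma low_degree_approx {ι : Type*} (n N : ℕ) (Q : MvPolynomial ι ℝ) :
    ∃ C : ℝ, 0 ≤ C ∧ ∀ (L : ι → MvPolynomial (Fin n) ℝ) (ε : ℝ) (B : Set (Fin n → ℝ)),
      0 ≤ ε → ε ≤ 1 → (∀ l, (L l).totalDegree ≤ 1) →
      (∀ y ∈ B, ∀ l, |MvPolynomial.eval y (L l)| ≤ ε) →
      ∃ P : MvPolynomial (Fin n) ℝ, P.totalDegree ≤ N ∧ ∀ y ∈ B,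
        |MvPolynomial.eval (fun l => MvPolynomial.eval y (L l)) Q - MvPolynomial.eval y P|
          ≤ C * ε ^ (N + 1) := by
  induction Q using MvPolynomial.induction_on' with
  | monomial u c =>
    refine ⟨|c|, abs_nonneg c, fun L ε B h0 h1 hL hB => ?_⟩
    by_cases hu : (u.sum fun _ e => e) ≤ N
    · refine ⟨MvPolynomial.C c * ∏ l ∈ u.support, L l ^ u l, ?_, fun y hy => ?_⟩
      · refine (MvPolynomial.totalDegree_mul _ _).trans ?_
        rw [MvPolynomial.totalDegree_C, zero_add]
        refine (MvPolynomial.totalDegree_finsetProd _ _).trans ((Finset.sum_le_sum ?_).trans hu)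
        intro l _
        exact (MvPolynomial.totalDegree_pow _ _).trans (by simpa using Nat.mul_le_mul_left (u l) (hL l))
      · rw [MvPolynomial.eval_monomial, map_mul, map_prod]
        simp only [map_pow, MvPolynomial.eval_C, Finsupp.prod, sub_self, abs_zero]
        positivity
    · refine ⟨0, by simp, fun y hy => ?_⟩
      rw [MvPolynomial.eval_monomial, map_zero, sub_zero, abs_mul, Finsupp.prod, Finset.abs_prod]
      gcongr
      calc ∏ l ∈ u.support, |MvPolynomial.eval y (L l) ^ u l|
          ≤ ∏ l ∈ u.support, ε ^ u l := by
            refine Finset.prod_le_prod (fun _ _ => abs_nonneg _) fun l _ => ?_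
            rw [abs_pow]
            exact pow_le_pow_left₀ (abs_nonneg _) (hB y hy l) _
        _ = ε ^ (u.sum fun _ e => e) := by rw [Finset.prod_pow_eq_pow_sum]; rfl
        _ ≤ ε ^ (N + 1) := pow_le_pow_of_le_one h0 h1 (by omega)
  | add p q hp hq =>
    obtain ⟨C, hC, h⟩ := hp
    obtain ⟨C', hC', h'⟩ := hq
    refine ⟨C + C', by positivity, fun L ε B h0 h1 hL hB => ?_⟩
    obtain ⟨P, hPd, hP⟩ := h L ε B h0 h1 hL hB
    obtain ⟨P', hPd', hP'⟩ := h' L ε B h0 h1 hL hB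
    refine ⟨P + P', (MvPolynomial.totalDegree_add _ _).trans (max_le hPd hPd'), fun y hy => ?_⟩
    rw [map_add, map_add, add_sub_add_comm, add_mul]
    exact (abs_add_le _ _).trans (add_le_add (hP y hy) (hP' y hy))

lemma affine_poly {n : ℕ} (f : EuclideanSpace ℝ (Fin n) →ₗ[ℝ] ℝ) (z : EuclideanSpace ℝ (Fin n)) :
    ∃ P : MvPolynomial (Fin n) ℝ, P.totalDegree ≤ 1 ∧
      ∀ y : EuclideanSpace ℝ (Fin n), MvPolynomial.eval (fun i => y i) P = f (y - z) := by
  refine ⟨∑ j, MvPolynomial.C (f (EuclideanSpace.single j 1)) * MvPolynomial.X j -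
    MvPolynomial.C (f z), ?_, fun y => ?_⟩
  · refine (MvPolynomial.totalDegree_sub _ _).trans (max_le ?_ (by simp))
    refine MvPolynomial.totalDegree_finsetSum_le fun j _ => ?_
    refine (MvPolynomial.totalDegree_mul _ _).trans ?_
    simp
  · have hy : y = ∑ j, y j • EuclideanSpace.single j (1 : ℝ) := by
      ext i; simp [Finset.sum_apply, Pi.single_apply]
    conv_rhs => rw [map_sub, hy, map_sum]
    simp [mul_comm]

/-- Taylor expansion of the kernel in `y` around `z`, to order `N`, with the remainder measured
relative to the value at `z`. -/
lemma kernel_local {n m : ℕ} (N : ℕ)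
    (T : Fin m → EuclideanSpace ℝ (Fin n) →ₗ[ℝ] EuclideanSpace ℝ (Fin n)) (s : Fin m → ℝ)
    {D : ℝ} (hD : 0 ≤ D) (hT : ∀ i v, ‖T i v‖ ≤ D * ‖v‖) :
    ∃ C : ℝ, 0 ≤ C ∧ ∀ (x z : EuclideanSpace ℝ (Fin n)) (δ ρ : ℝ), 0 < ρ → 0 ≤ δ →
      (∀ i, ρ ≤ ‖x - T i z‖) → 4 * D * δ ≤ ρ →
      ∃ P : MvPolynomial (Fin n) ℝ, P.totalDegree ≤ N ∧ ∀ y ∈ Metric.ball z δ,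
        |∏ i, ‖x - T i y‖ ^ (-s i) -
            (∏ i, ‖x - T i z‖ ^ (-s i)) * MvPolynomial.eval (fun i => y i) P|
          ≤ (∏ i, ‖x - T i z‖ ^ (-s i)) * (C * (D * δ / ρ) ^ (N + 1)) := by
  obtain ⟨Q, C, hC, hQ⟩ := kernel_polyApprox m n (N + 1) (fun i => -s i / 2)
  obtain ⟨C', hC', hL⟩ := low_degree_approx n N Q
  refine ⟨C + C', by positivity, fun x z δ ρ hρ hδ hx h4 => ?_⟩
  set ε : ℝ := D * δ / ρ with hε
  have hε0 : 0 ≤ ε := by positivity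
  have hε1 : ε ≤ 1 / 4 := by rw [hε, div_le_iff₀ hρ]; linarith
  have hxp : ∀ i, 0 < ‖x - T i z‖ := fun i => hρ.trans_le (hx i)
  let f : Fin m × Option (Fin n) → EuclideanSpace ℝ (Fin n) →ₗ[ℝ] ℝ := fun l =>
    match l with
    | (i, none) => (‖x - T i z‖ ^ 2)⁻¹ • ((innerₗ _ (x - T i z)) ∘ₗ T i)
    | (i, some j) => ‖x - T i z‖⁻¹ • ((EuclideanSpace.projₗ j) ∘ₗ T i)
  choose L hLd hLe using fun l => affine_poly (f l) z
  have hTε : ∀ i, ∀ y ∈ Metric.ball z δ, ‖T i (y - z)‖ ≤ ε * ‖x - T i z‖ := by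
    intro i y hy
    rw [Metric.mem_ball, dist_eq_norm] at hy
    calc _ ≤ D * ‖y - z‖ := hT i _
      _ ≤ D * δ := by gcongr
      _ = ε * ρ := by rw [hε]; field_simp
      _ ≤ _ := by gcongr; exact hx i
  have hsum : ∀ i y, ∑ j, f (i, some j) (y - z) ^ 2 = (‖T i (y - z)‖ / ‖x - T i z‖) ^ 2 := by
    intro i y
    rw [div_pow, EuclideanSpace.norm_sq_eq, Finset.sum_div]
    refine Finset.sum_congr rfl fun j _ => ?_
    simp only [f, LinearMap.smul_apply, LinearMap.comp_apply, smul_eq_mul, Real.norm_eq_abs, sq_abs]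
    rw [mul_pow, inv_pow, div_eq_inv_mul]
    rfl
  have hq : ∀ i, ∀ y ∈ Metric.ball z δ, (‖T i (y - z)‖ / ‖x - T i z‖) ^ 2 ≤ ε ^ 2 := by
    intro i y hy
    have : ‖T i (y - z)‖ / ‖x - T i z‖ ≤ ε := by
      rw [div_le_iff₀ (hxp i)]; exact hTε i y hy
    gcongr
  have hbd : ∀ y ∈ Metric.ball z δ, ∀ l, |f l (y - z)| ≤ ε := by
    rintro y hy ⟨i, _ | j⟩
    · simp only [f, LinearMap.smul_apply, LinearMap.comp_apply, innerₗ_apply_apply, smul_eq_mul]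
      rw [abs_mul, abs_of_pos (by have := hxp i; positivity), inv_mul_le_iff₀ (by have := hxp i; positivity)]
      calc _ ≤ ‖x - T i z‖ * ‖T i (y - z)‖ := abs_real_inner_le_norm _ _
        _ ≤ ‖x - T i z‖ * (ε * ‖x - T i z‖) := by gcongr; exact hTε i y hy
        _ = _ := by ring
    · refine abs_le_of_sq_le_sq ?_ hε0
      refine le_trans ?_ (hq i y hy)
      rw [← hsum]
      exact Finset.single_le_sum (f := fun j => f (i, some j) (y - z) ^ 2)
        (fun _ _ => sq_nonneg _) (Finset.mem_univ j)
  -- Expanding `‖(x - Tᵢ z) - Tᵢ (y - z)‖²` puts each factor in the form `(1 - w) ^ (-sᵢ / 2)`.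
  have hkey : ∀ i, ∀ y ∈ Metric.ball z δ, ‖x - T i y‖ ^ (-s i) = ‖x - T i z‖ ^ (-s i) *
      (1 - (2 * f (i, none) (y - z) - ∑ j, f (i, some j) (y - z) ^ 2)) ^ (-s i / 2) := by
    intro i y hy
    have e1 : ‖x - T i y‖ ^ 2 = ‖x - T i z‖ ^ 2 *
        (1 - (2 * f (i, none) (y - z) - ∑ j, f (i, some j) (y - z) ^ 2)) := by
      have : x - T i y = (x - T i z) - T i (y - z) := by rw [map_sub]; abel
      rw [hsum, this, norm_sub_sq_real]
      simp only [f, LinearMap.smul_apply, LinearMap.comp_apply, innerₗ_apply_apply, smul_eq_mul]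
      have := (hxp i).ne'
      field_simp
      ring
    have e2 : 0 ≤ 1 - (2 * f (i, none) (y - z) - ∑ j, f (i, some j) (y - z) ^ 2) := by
      have := (abs_le.1 (hbd y hy (i, none))).2
      have : 0 ≤ ∑ j, f (i, some j) (y - z) ^ 2 := Finset.sum_nonneg fun j _ => sq_nonneg _
      linarith
    have e3 : ∀ t : ℝ, 0 ≤ t → t ^ (-s i) = (t ^ 2) ^ (-s i / 2) := by
      intro t ht
      rw [← Real.rpow_natCast, ← Real.rpow_mul ht]
      congr 1
      push_cast
      ring
    rw [e3 _ (norm_nonneg _), e3 _ (norm_nonneg _), e1, Real.mul_rpow (sq_nonneg _) e2]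
  obtain ⟨P, hPd, hP⟩ := hL L ε ((fun y : EuclideanSpace ℝ (Fin n) => fun i => y i) ''
    Metric.ball z δ) hε0 (by linarith) hLd (by
      rintro _ ⟨y, hy, rfl⟩ l
      rw [hLe]
      exact hbd y hy l)
  refine ⟨P, hPd, fun y hy => ?_⟩
  have h1 := hP _ ⟨y, hy, rfl⟩
  have h2 := hQ (fun l => f l (y - z), ε) ⟨hε0, hε1, hbd y hy, fun i => by
    rw [hsum]; exact hq i y hy⟩
  simp only [hLe] at h1
  simp only at h2
  rw [Finset.prod_congr rfl fun i _ => hkey i y hy, Finset.prod_mul_distrib, ← mul_sub, abs_mul,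
    abs_of_nonneg (Finset.prod_nonneg fun i _ => Real.rpow_nonneg (norm_nonneg _) _)]
  refine mul_le_mul_of_nonneg_left ?_
    (Finset.prod_nonneg fun i _ => Real.rpow_nonneg (norm_nonneg _) _)
  rw [add_mul]
  exact (abs_sub_le _ _ _).trans (add_le_add h2 h1)

/-! ### Integration against atoms -/

lemma atom_ae_bound {n : ℕ} {p : ℝ} {z : EuclideanSpace ℝ (Fin n)} {δ : ℝ}
    {a : EuclideanSpace ℝ (Fin n) → ℝ} (ha : IsPAtom n p z δ a) :
    ∀ᵐ y, |a y| ≤ (volume.real (Metric.ball z δ)) ^ (-(1 / p)) := by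
  obtain ⟨hδ, -, -, h, -⟩ := ha
  have hv : 0 < volume (Metric.ball z δ) := Metric.measure_ball_pos _ _ hδ
  have hv' : volume (Metric.ball z δ) ≠ ⊤ := measure_ball_lt_top.ne
  rw [eLpNorm_exponent_top] at h
  filter_upwards [ae_le_eLpNormEssSup (f := a) (μ := volume)] with y hy
  have := hy.trans h
  have h2 := ENNReal.toReal_mono (ENNReal.rpow_ne_top_of_ne_zero hv.ne' hv') this
  rwa [toReal_enorm, ← ENNReal.toReal_rpow, Real.norm_eq_abs] at h2

lemma atom_integrable_mul {n : ℕ} {p : ℝ} {z : EuclideanSpace ℝ (Fin n)} {δ : ℝ}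
    {a : EuclideanSpace ℝ (Fin n) → ℝ} (ha : IsPAtom n p z δ a)
    {g : EuclideanSpace ℝ (Fin n) → ℝ} (hg : Measurable g) {M : ℝ}
    (hM : ∀ y ∈ Metric.ball z δ, |g y| ≤ M) :
    Integrable (fun y => g y * a y) ∧
    |∫ y, g y * a y| ≤ M * (volume.real (Metric.ball z δ)) ^ (1 - 1 / p) := by
  have hb := atom_ae_bound ha
  obtain ⟨hδ, ham, hs, -, -⟩ := ha
  set v := volume.real (Metric.ball z δ) with hv
  have hv0 : 0 < v := by
    rw [hv, measureReal_def]
    exact ENNReal.toReal_pos (Metric.measure_ball_pos _ _ hδ).ne' measure_ball_lt_top.ne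
  have hM0 : 0 ≤ M := (abs_nonneg _).trans (hM z (Metric.mem_ball_self hδ))
  have hsupp : Function.support (fun y => g y * a y) ⊆ Metric.ball z δ :=
    fun y hy => hs (right_ne_zero_of_mul hy)
  have hb2 : ∀ᵐ y ∂(volume.restrict (Metric.ball z δ)), ‖g y * a y‖ ≤ M * v ^ (-(1 / p)) := by
    filter_upwards [ae_restrict_of_ae hb, ae_restrict_mem Metric.isOpen_ball.measurableSet]
      with y hy hyb
    rw [norm_mul]
    exact mul_le_mul (hM y hyb) hy (norm_nonneg _) hM0
  constructor
  · rw [← integrableOn_iff_integrable_of_support_subset hsupp]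
    exact Measure.integrableOn_of_bounded measure_ball_lt_top.ne
      (hg.mul ham).aestronglyMeasurable hb2
  · rw [← setIntegral_eq_integral_of_forall_compl_eq_zero
      (fun y hy => Function.notMem_support.1 fun h => hy (hsupp h)), ← Real.norm_eq_abs]
    refine (norm_setIntegral_le_of_norm_le_const_ae measure_ball_lt_top hb2).trans (le_of_eq ?_)
    rw [mul_assoc, ← hv, sub_eq_neg_add, Real.rpow_add_one hv0.ne']

lemma atom_moment {n : ℕ} {p : ℝ} {z : EuclideanSpace ℝ (Fin n)} {δ : ℝ}
    {a : EuclideanSpace ℝ (Fin n) → ℝ} (ha : IsPAtom n p z δ a) (P : MvPolynomial (Fin n) ℝ)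
    (hP : P.totalDegree ≤ ⌊(n : ℝ) * (p⁻¹ - 1)⌋₊) :
    ∫ y, MvPolynomial.eval (fun i => y i) P * a y = 0 := by
  simp only [MvPolynomial.eval_eq', Finset.sum_mul, mul_assoc]
  have hint : ∀ d : Fin n →₀ ℕ, Integrable (fun y : EuclideanSpace ℝ (Fin n) =>
      (∏ i, y i ^ d i) * a y) := by
    intro d
    obtain ⟨M, hM⟩ := (isCompact_closedBall z δ).exists_bound_of_continuousOn
      (f := fun y : EuclideanSpace ℝ (Fin n) => ∏ i, y i ^ d i) (by fun_prop)
    exact (atom_integrable_mul ha (by fun_prop)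
      fun y hy => hM y (Metric.ball_subset_closedBall hy)).1
  rw [integral_finsetSum _ fun d _ => (hint d).const_mul _]
  refine Finset.sum_eq_zero fun d hd => ?_
  rw [integral_const_mul, ha.2.2.2.2 d, mul_zero]
  refine le_trans ?_ hP
  have := MvPolynomial.le_totalDegree hd
  rwa [Finsupp.sum_fintype _ _ (fun _ => rfl)] at this

/-- If `x` stays at distance `ρ ≥ 4 D δ` from every `Tᵢ z`, the vanishing moments remove the Taylor
polynomial of the kernel and leave only the remainder. -/
lemma atom_pointwise {n m : ℕ} {p : ℝ}
    (T : Fin m → EuclideanSpace ℝ (Fin n) →ₗ[ℝ] EuclideanSpace ℝ (Fin n)) (s : Fin m → ℝ)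
    {D : ℝ} (hD : 0 ≤ D) (hT : ∀ i v, ‖T i v‖ ≤ D * ‖v‖) (hs : ∀ i, 0 ≤ s i) :
    ∃ C : ℝ, 0 ≤ C ∧ ∀ (x z : EuclideanSpace ℝ (Fin n)) (δ ρ : ℝ)
      (a : EuclideanSpace ℝ (Fin n) → ℝ), IsPAtom n p z δ a → 0 < ρ →
      (∀ i, ρ ≤ ‖x - T i z‖) → 4 * D * δ ≤ ρ →
      |∫ y, (∏ i, ‖x - T i y‖ ^ (-s i)) * a y| ≤
        C * δ ^ (⌊(n : ℝ) * (p⁻¹ - 1)⌋₊ + 1) *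
          (volume.real (Metric.ball z δ)) ^ (1 - 1 / p) *
          ρ ^ (-(∑ i, s i + (⌊(n : ℝ) * (p⁻¹ - 1)⌋₊ + 1))) := by
  set N := ⌊(n : ℝ) * (p⁻¹ - 1)⌋₊ with hN
  obtain ⟨C, hC, h⟩ := kernel_local N T s hD hT
  refine ⟨C * D ^ (N + 1), by positivity, fun x z δ ρ a ha hρ hx h4 => ?_⟩
  obtain ⟨P, hPd, hP⟩ := h x z δ ρ hρ ha.1.le hx h4
  set K : ℝ := ∏ i, ‖x - T i z‖ ^ (-s i) with hK
  have hTm : ∀ i, Measurable (T i) := fun i =>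
    (T i).continuous_of_finiteDimensional.measurable
  have hPm : Measurable fun y : EuclideanSpace ℝ (Fin n) =>
      MvPolynomial.eval (fun i => y i) P := by
    simp only [MvPolynomial.eval_eq']
    fun_prop
  have hPc : Continuous fun y : EuclideanSpace ℝ (Fin n) =>
      MvPolynomial.eval (fun i => y i) P := by
    simp only [MvPolynomial.eval_eq']
    fun_prop
  have hKm : Measurable fun y => ∏ i, ‖x - T i y‖ ^ (-s i) := by
    refine Finset.measurable_prod _ fun i _ => ?_
    have := hTm i
    fun_prop
  obtain ⟨I1, B1⟩ := atom_integrable_mul ha (hKm.sub (hPm.const_mul K)) hP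
  simp only [Pi.sub_apply] at I1 B1
  obtain ⟨M, hM⟩ := (isCompact_closedBall z δ).exists_bound_of_continuousOn hPc.continuousOn
  have I2 := (atom_integrable_mul ha hPm
    fun y hy => hM y (Metric.ball_subset_closedBall hy)).1
  have e1 : ∫ y, (∏ i, ‖x - T i y‖ ^ (-s i)) * a y = ∫ y, ((∏ i, ‖x - T i y‖ ^ (-s i)) -
      K * MvPolynomial.eval (fun i => y i) P) * a y := by
    have : (fun y => (∏ i, ‖x - T i y‖ ^ (-s i)) * a y) = fun y =>
        ((∏ i, ‖x - T i y‖ ^ (-s i)) - K * MvPolynomial.eval (fun i => y i) P) * a y +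
          K * (MvPolynomial.eval (fun i => y i) P * a y) := by
      ext y; ring
    rw [this, integral_add I1 (I2.const_mul K), integral_const_mul, atom_moment ha P hPd,
      mul_zero, add_zero]
  rw [e1]
  refine B1.trans ?_
  have hKρ : K ≤ ρ ^ (-∑ i, s i) := by
    rw [← Finset.sum_neg_distrib, Real.rpow_sum_of_pos hρ]
    refine Finset.prod_le_prod (fun i _ => by positivity) fun i _ => ?_
    exact Real.rpow_le_rpow_of_nonpos hρ (hx i) (by linarith [hs i])
  have hδ := ha.1
  calc K * (C * (D * δ / ρ) ^ (N + 1)) * volume.real (Metric.ball z δ) ^ (1 - 1 / p)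
      ≤ ρ ^ (-∑ i, s i) * (C * (D * δ / ρ) ^ (N + 1)) *
        volume.real (Metric.ball z δ) ^ (1 - 1 / p) := by gcongr
    _ = _ := by
      rw [neg_add, Real.rpow_add hρ, div_pow, mul_pow, Real.rpow_neg hρ.le (N + 1 : ℝ)]
      rw [show ((N : ℝ) + 1) = ((N + 1 : ℕ) : ℝ) by push_cast; ring, Real.rpow_natCast]
      ring

/-! ### The tail integral and the conclusion -/

/-- Scaling the integrable weight `(1 + ‖x‖) ^ (-Λ)` by `τ`; outside the ball of radius `τ` one
has `τ + ‖x - c‖ ≤ 2 ‖x - c‖`. -/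
lemma lintegral_tail {n : ℕ} {Λ : ℝ} (hΛ : (n : ℝ) < Λ) :
    ∃ C : ℝ, 0 ≤ C ∧ ∀ (c : EuclideanSpace ℝ (Fin n)) (τ : ℝ), 0 < τ →
      ∫⁻ x in (Metric.ball c τ)ᶜ, ENNReal.ofReal (‖x - c‖ ^ (-Λ)) ≤
        ENNReal.ofReal (C * τ ^ ((n : ℝ) - Λ)) := by
  have hΛ0 : 0 < Λ := lt_of_le_of_lt (Nat.cast_nonneg n) hΛ
  set E := EuclideanSpace ℝ (Fin n)
  have hI : Integrable (fun x : E => (1 + ‖x‖) ^ (-Λ)) :=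
    integrable_one_add_norm (by simpa [E] using hΛ)
  refine ⟨2 ^ Λ * ∫ x : E, (1 + ‖x‖) ^ (-Λ), by positivity, fun c τ hτ => ?_⟩
  have hI1 : Integrable (fun x : E => (1 + ‖τ⁻¹ • x‖) ^ (-Λ)) :=
    hI.comp_smul (inv_ne_zero hτ.ne')
  have hI2 : Integrable (fun x : E => 2 ^ Λ * τ ^ (-Λ) * (1 + ‖τ⁻¹ • (x - c)‖) ^ (-Λ)) :=
    (hI1.comp_sub_right c).const_mul _
  calc ∫⁻ x in (Metric.ball c τ)ᶜ, ENNReal.ofReal (‖x - c‖ ^ (-Λ))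
      ≤ ∫⁻ x in (Metric.ball c τ)ᶜ,
          ENNReal.ofReal (2 ^ Λ * τ ^ (-Λ) * (1 + ‖τ⁻¹ • (x - c)‖) ^ (-Λ)) := by
        refine setLIntegral_mono' Metric.isOpen_ball.measurableSet.compl fun x hx => ?_
        refine ENNReal.ofReal_le_ofReal ?_
        rw [Set.mem_compl_iff, Metric.mem_ball, dist_eq_norm, not_lt] at hx
        have hxp : 0 < ‖x - c‖ := hτ.trans_le hx
        rw [norm_smul, norm_inv, Real.norm_of_nonneg hτ.le, mul_assoc,
          ← Real.mul_rpow hτ.le (by positivity), Real.rpow_neg (by positivity),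
          Real.rpow_neg (by positivity), ← div_eq_mul_inv, le_div_iff₀ (by positivity),
          inv_mul_le_iff₀ (by positivity), ← Real.mul_rpow (by positivity) (by positivity)]
        refine Real.rpow_le_rpow (by positivity) ?_ hΛ0.le
        rw [mul_add, mul_one, mul_inv_cancel_left₀ hτ.ne']
        linarith
    _ ≤ ∫⁻ x, ENNReal.ofReal (2 ^ Λ * τ ^ (-Λ) * (1 + ‖τ⁻¹ • (x - c)‖) ^ (-Λ)) :=
        setLIntegral_le_lintegral _ _
    _ = ENNReal.ofReal (∫ x, 2 ^ Λ * τ ^ (-Λ) * (1 + ‖τ⁻¹ • (x - c)‖) ^ (-Λ)) :=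
        (ofReal_integral_eq_lintegral_ofReal hI2 (.of_forall fun x => by positivity)).symm
    _ = _ := by
        congr 1
        rw [integral_const_mul,
          integral_sub_right_eq_self (fun x : E => (1 + ‖τ⁻¹ • x‖) ^ (-Λ)) c,
          Measure.integral_comp_inv_smul_of_nonneg volume (fun x : E => (1 + ‖x‖) ^ (-Λ)) hτ.le,
          sub_eq_add_neg, Real.rpow_add hτ, Real.rpow_natCast, finrank_euclideanSpace,
          Fintype.card_fin, smul_eq_mul]
        ring

/-- Under the hypotheses on the singular matrices `A i`, with
`0 < p ≤ 1`, `1/q = 1/p - r`, and `D = maxᵢ max_{|y|=1}|Aᵢ y|`, the integral of `|T_r a|^q`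
over the complement `R = (⋃ᵢ B(Aᵢ z, 4Dδ))ᶜ` is bounded by a constant independent of the
`p`-atom `a`. -/
theorem Tr_atom_far_bound
    (n m : ℕ) (hm : 1 < m) (hmn : m ≤ n)
    (ni : Fin m → ℕ) (hni : ∀ i, 0 < ni i) (hsum : ∑ i, ni i = n)
    (A : Fin m → Matrix (Fin n) (Fin n) ℝ)
    (hsing : ∀ i, ¬ IsUnit (A i))
    (hdim : ∀ j, Module.finrank ℝ
      (LinearMap.ker (Matrix.toEuclideanLin (A j))) = n - ni j)
    (hindep : iSupIndep fun i : Fin m =>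
      ⨅ j ∈ ({i}ᶜ : Set (Fin m)), LinearMap.ker (Matrix.toEuclideanLin (A j)))
    (hspan : (⨆ i : Fin m,
      ⨅ j ∈ ({i}ᶜ : Set (Fin m)), LinearMap.ker (Matrix.toEuclideanLin (A j))) = ⊤)
    (hinv : IsUnit (∑ i, A i))
    (r p q : ℝ) (hr0 : 0 < r) (hr1 : r < 1)
    (hp0 : 0 < p) (hp1 : p ≤ 1) (hq : 1 / q = 1 / p - r)
    (α : Fin m → ℝ) (hα : ∀ i, α i = r * ni i)
    (D : ℝ)
    (hD : IsGreatest {t : ℝ | ∃ (i : Fin m) (y : EuclideanSpace ℝ (Fin n)),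
      ‖y‖ = 1 ∧ t = ‖Matrix.toEuclideanLin (A i) y‖} D) :
    ∃ C > 0, ∀ (z : EuclideanSpace ℝ (Fin n)) (δ : ℝ) (a : EuclideanSpace ℝ (Fin n) → ℝ),
      IsPAtom n p z δ a →
      ∫⁻ x in (⋃ i : Fin m, Metric.ball (Matrix.toEuclideanLin (A i) z) (4 * D * δ))ᶜ,
        ENNReal.ofReal
          (|∫ y, (∏ i, ‖x - Matrix.toEuclideanLin (A i) y‖ ^ (-(ni i : ℝ) + α i)) * a y| ^ q)
        ≤ ENNReal.ofReal C := by
  set N := ⌊(n : ℝ) * (p⁻¹ - 1)⌋₊ with hN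
  set T : Fin m → EuclideanSpace ℝ (Fin n) →ₗ[ℝ] EuclideanSpace ℝ (Fin n) :=
    fun i => Matrix.toEuclideanLin (A i) with hTdef
  have hn : 0 < n := by omega
  have hn' : (0 : ℝ) < n := by exact_mod_cast hn
  have : Nonempty (Fin n) := ⟨⟨0, hn⟩⟩
  have hT : ∀ i v, ‖T i v‖ ≤ D * ‖v‖ := by
    intro i v
    rcases eq_or_ne v 0 with rfl | hv
    · simp
    · have hv' : 0 < ‖v‖ := norm_pos_iff.2 hv
      have := hD.2 ⟨i, ‖v‖⁻¹ • v, by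
        rw [norm_smul, norm_inv, norm_norm, inv_mul_cancel₀ hv'.ne'], rfl⟩
      rw [map_smul, norm_smul, norm_inv, norm_norm, inv_mul_le_iff₀ hv'] at this
      rwa [mul_comm]
  -- If `D = 0` then every `A i` vanishes, contradicting the invertibility of their sum.
  have hDpos : 0 < D := by
    by_contra hD0
    have hA0 : ∀ i, A i = 0 := by
      intro i
      apply (Matrix.toEuclideanLin (𝕜 := ℝ)).injective
      rw [map_zero]
      ext1 v
      have h1 := hT i v
      have : ‖T i v‖ ≤ 0 :=
        h1.trans (mul_nonpos_of_nonpos_of_nonneg (not_lt.1 hD0) (norm_nonneg v))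
      simpa using norm_le_zero_iff.1 this
    simp only [hA0, Finset.sum_const_zero] at hinv
    exact not_isUnit_zero hinv
  have hp1' : 1 ≤ 1 / p := by rw [le_div_iff₀ hp0]; linarith
  have hq0 : 0 < q := by
    rw [← one_div_pos, hq]; linarith
  have hqne := hq0.ne'
  set s : Fin m → ℝ := fun i => (1 - r) * ni i with hs
  have hs0 : ∀ i, 0 ≤ s i := fun i => mul_nonneg (by linarith) (Nat.cast_nonneg _)
  have hexp : ∀ i, -(ni i : ℝ) + α i = -s i := fun i => by rw [hα, hs]; ring
  have hS : ∑ i, s i = (1 - r) * n := by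
    rw [hs, ← Finset.mul_sum, ← hsum]; push_cast; rfl
  simp only [hexp]
  set κ : ℝ := ∑ i, s i + (N + 1) with hκ
  -- The order `N + 1` of the remainder exceeds `n (1/p - 1)`, which is exactly what makes
  -- `‖x‖ ^ (-(κ q))` integrable at infinity.
  have hΛ : (n : ℝ) < κ * q := by
    have h1 : (n : ℝ) * (p⁻¹ - 1) < N + 1 := Nat.lt_floor_add_one _
    have h2 : (n : ℝ) * (1 / q) < κ := by
      rw [hκ, hS, hq, one_div]; nlinarith
    rwa [mul_one_div, div_lt_iff₀ hq0] at h2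
  obtain ⟨C₁, hC₁, h₁⟩ := atom_pointwise (p := p) T s hDpos.le hT hs0
  obtain ⟨C₂, hC₂, h₂⟩ := lintegral_tail hΛ
  set V := volume.real (Metric.ball (0 : EuclideanSpace ℝ (Fin n)) 1) with hV
  refine ⟨m * ((C₁ * V ^ (1 - 1 / p)) ^ q * (C₂ * (4 * D) ^ ((n : ℝ) - κ * q))) + 1,
    by positivity, fun z δ a ha => ?_⟩
  have hδ := ha.1
  set G : ℝ := (C₁ * δ ^ (N + 1) * (volume.real (Metric.ball z δ)) ^ (1 - 1 / p)) ^ q with hG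
  have hG0 : 0 ≤ G := by positivity
  have hτ : 0 < 4 * D * δ := by positivity
  set R : Set (EuclideanSpace ℝ (Fin n)) := (⋃ i : Fin m, Metric.ball (T i z) (4 * D * δ))ᶜ with hR
  have hRm : MeasurableSet R :=
    (MeasurableSet.iUnion fun i => Metric.isOpen_ball.measurableSet).compl
  have hpt : ∀ x ∈ R, ENNReal.ofReal (|∫ y, (∏ i, ‖x - T i y‖ ^ (-s i)) * a y| ^ q) ≤
      ∑ k, ENNReal.ofReal G * ENNReal.ofReal (‖x - T k z‖ ^ (-(κ * q))) := by
    intro x hx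
    have hx' : ∀ i, 4 * D * δ ≤ ‖x - T i z‖ := by
      intro i
      rw [hR, Set.mem_compl_iff, Set.mem_iUnion, not_exists] at hx
      simpa [dist_eq_norm] using hx i
    have : Nonempty (Fin m) := ⟨⟨0, by omega⟩⟩
    -- Use the centre `T k z` nearest to `x`; the sum over `k` absorbs its dependence on `x`.
    obtain ⟨k, hk⟩ := Finite.exists_min fun i => ‖x - T i z‖
    have hkp : 0 < ‖x - T k z‖ := hτ.trans_le (hx' k)
    have hb := h₁ x z δ _ a ha hkp hk (hx' k)
    refine le_trans ?_ (Finset.single_le_sum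
      (f := fun k => ENNReal.ofReal G * ENNReal.ofReal (‖x - T k z‖ ^ (-(κ * q))))
      (fun _ _ => zero_le) (Finset.mem_univ k))
    rw [← ENNReal.ofReal_mul hG0]
    refine ENNReal.ofReal_le_ofReal ?_
    refine (Real.rpow_le_rpow (abs_nonneg _) hb hq0.le).trans (le_of_eq ?_)
    rw [Real.mul_rpow (by positivity) (by positivity), ← Real.rpow_mul hkp.le, hG, neg_mul]
  have hvol : volume.real (Metric.ball z δ) = δ ^ n * V := by
    rw [measureReal_def, Measure.addHaar_ball _ _ hδ.le, ENNReal.toReal_mul,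
      ENNReal.toReal_ofReal (by positivity), finrank_euclideanSpace, Fintype.card_fin]
    rfl
  -- By the relation `1/q = 1/p - r`, all powers of `δ` cancel.
  have hscale : G * (C₂ * (4 * D * δ) ^ ((n : ℝ) - κ * q)) =
      (C₁ * V ^ (1 - 1 / p)) ^ q * (C₂ * (4 * D) ^ ((n : ℝ) - κ * q)) := by
    have hV0 : 0 ≤ V := measureReal_nonneg
    have e0 : (δ ^ n * V) ^ (1 - 1 / p) = δ ^ (n * (1 - 1 / p)) * V ^ (1 - 1 / p) := by
      rw [Real.mul_rpow (by positivity) hV0, Real.rpow_mul hδ.le, Real.rpow_natCast]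
    have e1 : G = (C₁ * V ^ (1 - 1 / p)) ^ q * δ ^ ((N + 1 + n * (1 - 1 / p)) * q) := by
      rw [hG, hvol, e0, Real.rpow_mul hδ.le (N + 1 + n * (1 - 1 / p)) q,
        ← Real.mul_rpow (by positivity) (by positivity), Real.rpow_add hδ,
        show ((N : ℝ) + 1) = ((N + 1 : ℕ) : ℝ) by push_cast; ring, Real.rpow_natCast]
      congr 1
      ring
    have e2 : δ ^ ((N + 1 + n * (1 - 1 / p)) * q) * δ ^ ((n : ℝ) - κ * q) = 1 := by
      rw [← Real.rpow_add hδ]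
      convert Real.rpow_zero δ using 2
      have : (1 / p - r) * q = 1 := by rw [← hq]; field_simp
      rw [hκ, hS]
      linear_combination (-(n : ℝ)) * this
    rw [e1, Real.mul_rpow (by positivity) hδ.le]
    linear_combination ((C₁ * V ^ (1 - 1 / p)) ^ q * (C₂ * (4 * D) ^ ((n : ℝ) - κ * q))) * e2
  calc ∫⁻ x in R, ENNReal.ofReal (|∫ y, (∏ i, ‖x - T i y‖ ^ (-s i)) * a y| ^ q)
      ≤ ∫⁻ x in R, ∑ k, ENNReal.ofReal G * ENNReal.ofReal (‖x - T k z‖ ^ (-(κ * q))) :=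
        setLIntegral_mono' hRm hpt
    _ = ∑ k, ENNReal.ofReal G * ∫⁻ x in R, ENNReal.ofReal (‖x - T k z‖ ^ (-(κ * q))) := by
        rw [lintegral_finsetSum _ fun k _ => by fun_prop]
        exact Finset.sum_congr rfl fun k _ => lintegral_const_mul _ (by fun_prop)
    _ ≤ ∑ k : Fin m, ENNReal.ofReal G *
          ENNReal.ofReal (C₂ * (4 * D * δ) ^ ((n : ℝ) - κ * q)) := by
        refine Finset.sum_le_sum fun k _ => mul_le_mul_right ?_ _
        refine le_trans (lintegral_mono_set ?_) (h₂ (T k z) _ hτ)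
        exact Set.compl_subset_compl.2 (Set.subset_iUnion_of_subset k subset_rfl)
    _ = ENNReal.ofReal (m * ((C₁ * V ^ (1 - 1 / p)) ^ q *
          (C₂ * (4 * D) ^ ((n : ℝ) - κ * q)))) := by
        rw [Finset.sum_const, Finset.card_univ, Fintype.card_fin, ← ENNReal.ofReal_mul hG0,
          hscale, nsmul_eq_mul, ENNReal.ofReal_mul (Nat.cast_nonneg m), ENNReal.ofReal_natCast]
    _ ≤ _ := ENNReal.ofReal_le_ofReal (by linarith)
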